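/- Let p = 2, q = 2^r, and let v be an odd prime such that −1 is a power of 2 modulo v (the semiprimitive case). Take m = v and s = q−1, fix b ∈ F_q^*, and let ind b denote the index of b with respect to g (the unique integer 0 ≤ ind b ≤ q−2 with g^{ind b} = b), so h = ind b. Then P_v(0, q−1, ind b) − (q^{v−1} − 1)/(v·(q−1)) equals: 0 if ord_v 2 ∤ r; ε·√(q^{v−2})/v if ord_v 2 | r and v ∤ ind b; −ε·(v−1)·√(q^{v−2})/v if ord_v 2 | r and v | ind b, where ε = (−1)^{r/ord_v 2} and ord_v 2 is the multiplicative order of 2 modulo v. -/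

import Mathlib

/-!
Let `E / F` have prime degree `v`. Passing to minimal polynomials, the irreducible polynomials to be
counted correspond `v` to one to the elements of `E` of trace zero and norm `g ^ h`. Their number
`N h` depends only on the class of `g ^ h` modulo `v`-th powers. If `v ∤ q - 1`, there is a single
class, and the total `q ^ (v - 1)` of elements of trace zero determines `N h`.

If `v ∣ q - 1`, let `χ` be a character of `F` of order `v` and `G` the Gauss sum of `χ ∘ N` over
`E`. Orthogonality of additive characters gives `q * ∑ b, N b * χ b = (q - 1) * G`. Since `G` is
invariant under `χ ↦ χ ^ p` and `-1` is a power of `p` modulo `v`, it coincides with its conjugate,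
so that `G ^ 2 = q ^ v`. The powers of a primitive `v`-th root of unity satisfy only one linear
relation over `ℚ`, hence this sum and the total count determine every `N h` up to the common sign
of `G`. That sign is read off modulo `v`, because `v` divides `N h`.
-/

noncomputable section

open Complex Polynomial Classical

/-- `P_m(a,s,h)`: the number of monic irreducible `f = x^m − a x^{m-1} + ⋯ + (−1)^m b`
of degree `m` over `F` with `b ∈ g^h·⟨g^s⟩`. -/
def PP (F : Type*) [Field F] [Fintype F] (g : F) (m s h : ℕ) (a : F) : ℕ :=
  Nat.card {f : Polynomial F // f.Monic ∧ f.natDegree = m ∧ Irreducible f ∧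
    f.coeff (m - 1) = -a ∧ ∃ k : ℕ, (-1 : F) ^ m * f.coeff 0 = g ^ (h + s * k)}

section CyclicSums

variable {M : Type*} [AddCommMonoid M]

theorem sum_range_mul_of_periodic {f : ℕ → M} {v : ℕ} (hf : Function.Periodic f v) (w : ℕ) :
    ∑ i ∈ Finset.range (w * v), f i = w • ∑ i ∈ Finset.range v, f i := by
  induction w with
  | zero => simp
  | succ w ih =>
    have hshift (i : ℕ) : f (w * v + i) = f i := by rw [add_comm]; exact hf.nat_mul w i
    rw [Nat.succ_mul, Finset.sum_range_add, ih, Finset.sum_congr rfl fun i _ ↦ hshift i, succ_nsmul]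

theorem sum_eq_sum_range_card_pow {G : Type*} [Group G] [Fintype G] {g : G}
    (hg : ∀ u, u ∈ Subgroup.zpowers g) (f : G → M) :
    ∑ u, f u = ∑ i ∈ Finset.range (Fintype.card G), f (g ^ i) := by
  have horder : orderOf g = Fintype.card G := by
    rw [orderOf_eq_card_of_forall_mem_zpowers hg, Nat.card_eq_fintype_card]
  rw [← horder, ← IsCyclic.image_range_orderOf hg, Finset.sum_image]
  rw [Finset.coe_range]
  exact pow_injOn_Iio_orderOf

theorem sum_eq_apply_zero_add_sum_units {K : Type*} [GroupWithZero K] [Fintype K] (f : K → M) :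
    ∑ x, f x = f 0 + ∑ u : Kˣ, f u := by
  rw [← Finset.add_sum_erase _ f (Finset.mem_univ 0), Finset.sum_subtype (p := (· ≠ 0)) _ (by simp)]
  exact congrArg _ (Fintype.sum_equiv unitsEquivNeZero _ _ fun _ ↦ rfl).symm

theorem sum_eq_apply_zero_add_nsmul_sum_range {K : Type*} [GroupWithZero K] [Fintype K] {g : Kˣ}
    (hg : ∀ u, u ∈ Subgroup.zpowers g) {v w : ℕ} (hcard : Fintype.card K - 1 = w * v) {f : K → M}
    (hf : Function.Periodic (fun i : ℕ ↦ f ((g : K) ^ i)) v) :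
    ∑ x, f x = f 0 + w • ∑ i ∈ Finset.range v, f ((g : K) ^ i) := by
  rw [sum_eq_apply_zero_add_sum_units, sum_eq_sum_range_card_pow hg fun u : Kˣ ↦ f u,
    Fintype.card_units, hcard]
  simp only [Units.val_pow_eq_pow_val]
  rw [sum_range_mul_of_periodic hf]

end CyclicSums

section Minpoly

variable {F E : Type*} [Field F] [Field E] [Algebra F E] [FiniteDimensional F E] {α : E}

theorem charpoly_lmul_eq_minpoly (hα : (minpoly F α).natDegree = Module.finrank F E) :
    (Algebra.lmul F E α).charpoly = minpoly F α := by
  refine eq_of_monic_of_dvd_of_natDegree_le (minpoly.monic (.of_finite F α))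
    (LinearMap.charpoly_monic _) (minpoly.dvd F α ?_) ?_
  · apply Algebra.lmul_injective (R := F)
    rw [← Polynomial.aeval_algHom_apply, LinearMap.aeval_self_charpoly, map_zero]
  · rw [LinearMap.charpoly_natDegree, hα]

theorem norm_eq_coeff_zero_minpoly (hα : (minpoly F α).natDegree = Module.finrank F E) :
    Algebra.norm F α = (-1) ^ Module.finrank F E * (minpoly F α).coeff 0 := by
  rw [Algebra.norm_apply, LinearMap.det_eq_sign_charpoly_coeff, charpoly_lmul_eq_minpoly hα]

theorem trace_eq_neg_coeff_minpoly (hα : (minpoly F α).natDegree = Module.finrank F E) :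
    Algebra.trace F E α = -(minpoly F α).coeff (Module.finrank F E - 1) := by
  have : Nonempty (Fin (Module.finrank F E)) := Fin.pos_iff_nonempty.mp Module.finrank_pos
  rw [Algebra.trace_apply, LinearMap.trace_eq_matrix_trace F (Module.finBasis F E),
    Matrix.trace_eq_neg_charpoly_coeff, LinearMap.charpoly_toMatrix,
    charpoly_lmul_eq_minpoly hα, Fintype.card_fin]

theorem natDegree_minpoly_eq_finrank_of_prime (hE : (Module.finrank F E).Prime)
    (hα : α ∉ (algebraMap F E).range) : (minpoly F α).natDegree = Module.finrank F E :=
  (hE.eq_one_or_self_of_dvd _ (minpoly.degree_dvd (.of_finite F α))).resolve_left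
    fun h ↦ hα (minpoly.natDegree_eq_one_iff.mp h)

end Minpoly

section IrreducibleCount

variable (F E : Type*) [Field F] [Field E] [Finite E] [Algebra F E]

variable {F} in
theorem natCard_minpoly_eq {f : F[X]} (hmonic : f.Monic) (hirr : Irreducible f)
    (hdeg : f.natDegree = Module.finrank F E) :
    Nat.card {α : E // minpoly F α = f} = Module.finrank F E := by
  have : Finite F := Finite.of_injective _ (algebraMap F E).injective
  have := Fintype.ofFinite E
  have hsplits : (f.map (algebraMap F E)).Splits := by
    refine (FiniteField.isSplittingField_sub E F).splits.of_dvd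
      (Polynomial.map_ne_zero (FiniteField.X_pow_card_sub_X_ne_zero F Fintype.one_lt_card))
      (Polynomial.map_dvd _ ?_)
    rw [Fintype.card_eq_nat_card, Module.natCard_eq_pow_finrank (K := F)]
    exact hirr.natDegree_dvd_iff_dvd_X_pow_card_pow_sub_X.mp hdeg.dvd
  have hroots (α : E) : minpoly F α = f ↔ α ∈ f.rootSet E := by
    rw [mem_rootSet_of_ne hmonic.ne_zero]
    exact ⟨fun h ↦ h ▸ minpoly.aeval F α,
      fun h ↦ (minpoly.eq_of_irreducible_of_monic hirr h hmonic).symm⟩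
  rw [Nat.card_congr (Equiv.subtypeEquivRight hroots), Nat.card_eq_fintype_card,
    card_rootSet_eq_natDegree (PerfectField.separable_of_irreducible hirr) hsplits, hdeg]

theorem natCard_minpoly_mem {S : Set F[X]}
    (hS : ∀ f ∈ S, f.Monic ∧ f.natDegree = Module.finrank F E ∧ Irreducible f) :
    Nat.card {α : E // minpoly F α ∈ S} = Module.finrank F E * Nat.card S := by
  have hfiber (f : S) : Nat.card {α : E // minpoly F α = f} = Module.finrank F E :=
    have ⟨hmonic, hdeg, hirr⟩ := hS f f.2
    natCard_minpoly_eq E hmonic hirr hdeg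
  let φ (α : {α : E // minpoly F α ∈ S}) : S := ⟨minpoly F α.1, α.2⟩
  have hφ (f : S) : Nat.card {α // φ α = f} = Module.finrank F E := by
    rw [← hfiber f]
    exact Nat.card_congr
      { toFun α := ⟨α.1.1, congrArg Subtype.val α.2⟩
        invFun α := ⟨⟨α.1, α.2.symm ▸ f.2⟩, Subtype.ext α.2⟩ }
  have hsurj : Function.Surjective φ := fun f ↦ by
    have : 0 < Nat.card {α // φ α = f} := hφ f ▸ Module.finrank_pos
    obtain ⟨⟨α, hα⟩⟩ := (Nat.card_pos_iff.mp this).1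
    exact ⟨α, hα⟩
  have := Finite.of_surjective φ hsurj
  have := Fintype.ofFinite S
  rw [← Nat.card_congr (Equiv.sigmaFiberEquiv φ), Nat.card_sigma, Fintype.sum_congr _ _ hφ,
    Finset.sum_const, Finset.card_univ, smul_eq_mul, mul_comm, Nat.card_eq_fintype_card]

end IrreducibleCount

/-- The number of elements of the extension `E / F` of trace zero and norm `b`, the count through
which irreducible polynomials with zero trace coefficient and prescribed norm are enumerated.
For infinitely many such elements it is `0`, the value of `Nat.card`. -/
def traceZeroNormCount (F E : Type*) [Field F] [Field E] [Algebra F E] (b : F) : ℕ :=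
  Nat.card {α : E // Algebra.trace F E α = 0 ∧ Algebra.norm F α = b}

section TraceZeroNormCount

variable (F E : Type*) [Field F] [Field E] [Algebra F E]

theorem traceZeroNormCount_zero [FiniteDimensional F E] : traceZeroNormCount F E 0 = 1 := by
  have hzero (α : E) : Algebra.trace F E α = 0 ∧ Algebra.norm F α = 0 ↔ α = 0 := by
    rw [Algebra.norm_eq_zero_iff, and_iff_right_iff_imp]
    rintro rfl
    exact map_zero _
  rw [traceZeroNormCount, Nat.card_congr (Equiv.subtypeEquivRight hzero)]
  exact Nat.card_unique

theorem traceZeroNormCount_mul_pow_finrank (b : F) {c : F} (hc : c ≠ 0) :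
    traceZeroNormCount F E (b * c ^ Module.finrank F E) = traceZeroNormCount F E b := by
  have hcE : algebraMap F E c ≠ 0 := by simpa using hc
  refine (Nat.card_congr <| (Equiv.mulLeft₀ _ hcE).subtypeEquiv fun α ↦ ?_).symm
  change _ ↔ Algebra.trace F E (algebraMap F E c * α) = 0 ∧
    Algebra.norm F (algebraMap F E c * α) = _
  rw [map_mul (Algebra.norm F), Algebra.norm_algebraMap, mul_comm b,
    mul_right_inj' (pow_ne_zero _ hc), ← Algebra.smul_def, map_smul, smul_eq_zero_iff_right hc]

theorem periodic_traceZeroNormCount_pow {g : F} (hg : g ≠ 0) :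
    Function.Periodic (fun i : ℕ ↦ traceZeroNormCount F E (g ^ i)) (Module.finrank F E) :=
  fun i ↦ by simp only [pow_add, traceZeroNormCount_mul_pow_finrank F E _ hg]

theorem traceZeroNormCount_pow_eq_finrank_mul_PP [Fintype F] [Finite E]
    (hE : (Module.finrank F E).Prime) (hEF : (Module.finrank F E : F) ≠ 0) (g : Fˣ) (h : ℕ) :
    traceZeroNormCount F E ((g : F) ^ h) =
      Module.finrank F E * PP F g (Module.finrank F E) (Fintype.card F - 1) h 0 := by
  have hpow (k : ℕ) : (g : F) ^ (h + (Fintype.card F - 1) * k) = (g : F) ^ h := by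
    rw [pow_add, pow_mul, FiniteField.pow_card_sub_one_eq_one _ g.ne_zero, one_pow, mul_one]
  have hdeg (α : E) (ht : Algebra.trace F E α = 0) (hn : Algebra.norm F α = (g : F) ^ h) :
      (minpoly F α).natDegree = Module.finrank F E := by
    refine natDegree_minpoly_eq_finrank_of_prime hE ?_
    rintro ⟨c, rfl⟩
    obtain rfl : c = 0 := by simpa [Algebra.trace_algebraMap, hEF] using ht
    rw [map_zero, Algebra.norm_zero] at hn
    exact pow_ne_zero h g.ne_zero hn.symm
  simp only [PP, hpow, exists_const, neg_zero]
  rw [← Set.coe_ofPred, ← natCard_minpoly_mem F E (fun f hf ↦ ⟨hf.1, hf.2.1, hf.2.2.1⟩)]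
  refine Nat.card_congr (Equiv.subtypeEquivRight fun α ↦ ⟨fun ⟨ht, hn⟩ ↦ ?_, ?_⟩)
  · have hα := hdeg α ht hn
    refine ⟨minpoly.monic (.of_finite F α), hα, minpoly.irreducible (.of_finite F α), ?_, ?_⟩
    · rw [← neg_eq_zero, ← trace_eq_neg_coeff_minpoly hα, ht]
    · rw [← norm_eq_coeff_zero_minpoly hα, hn]
  · rintro ⟨-, hα, -, htrace, hnorm⟩
    exact ⟨by rw [trace_eq_neg_coeff_minpoly hα, htrace, neg_zero],
      by rw [norm_eq_coeff_zero_minpoly hα, hnorm]⟩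

end TraceZeroNormCount

section NormSums

variable {F : Type*} (E : Type*) [Field F] [Fintype F] [Field E] [Algebra F E]

theorem sum_traceZeroNormCount_nsmul [Fintype E] {M : Type*} [AddCommMonoid M] (f : F → M) :
    ∑ b, traceZeroNormCount F E b • f b =
      ∑ α : E with Algebra.trace F E α = 0, f (Algebra.norm F α) := by
  rw [← Finset.sum_fiberwise _ (Algebra.norm F) fun α ↦ f (Algebra.norm F α)]
  refine Finset.sum_congr rfl fun b _ ↦ ?_
  rw [traceZeroNormCount, Nat.card_eq_fintype_card, Fintype.card_subtype, ← Finset.filter_filter,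
    ← Finset.sum_const]
  exact Finset.sum_congr rfl fun α hα ↦ by rw [(Finset.mem_filter.mp hα).2]

variable [Finite E]

variable (F) in
theorem natCard_ker_trace :
    Nat.card (Algebra.trace F E).ker = Fintype.card F ^ (Module.finrank F E - 1) := by
  rw [← Module.Dual.finrank_ker_add_one_of_ne_zero (Algebra.trace_ne_zero F E),
    Nat.add_sub_cancel, Module.natCard_eq_pow_finrank (K := F), Nat.card_eq_fintype_card]

variable (F) in
theorem sum_traceZeroNormCount :
    ∑ b, traceZeroNormCount F E b = Fintype.card F ^ (Module.finrank F E - 1) := by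
  have := Fintype.ofFinite E
  have hsum := sum_traceZeroNormCount_nsmul E fun _ : F ↦ 1
  simp only [smul_eq_mul, mul_one, Finset.sum_const] at hsum
  rw [hsum, ← natCard_ker_trace, ← Fintype.card_subtype, ← Nat.card_eq_fintype_card]
  rfl

theorem traceZeroNormCount_mul_card_sub_one_add_one_of_coprime
    (hcop : (Fintype.card F - 1).Coprime (Module.finrank F E)) (u : Fˣ) :
    traceZeroNormCount F E u * (Fintype.card F - 1) + 1 =
      Fintype.card F ^ (Module.finrank F E - 1) := by
  have hconst (w : Fˣ) : traceZeroNormCount F E w = traceZeroNormCount F E u := by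
    rw [← Fintype.card_units, ← Nat.card_eq_fintype_card] at hcop
    obtain ⟨c, hc⟩ := (powCoprime hcop).surjective (u⁻¹ * w)
    obtain rfl : w = u * c ^ Module.finrank F E := (eq_inv_mul_iff_mul_eq.mp hc).symm
    rw [Units.val_mul, Units.val_pow_eq_pow_val, traceZeroNormCount_mul_pow_finrank _ _ _ c.ne_zero]
  rw [← sum_traceZeroNormCount F E, sum_eq_apply_zero_add_sum_units, traceZeroNormCount_zero,
    Fintype.sum_congr _ _ hconst, Finset.sum_const, Finset.card_univ, Fintype.card_units,
    smul_eq_mul, mul_comm, add_comm]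

end NormSums

section GaussSum

theorem apply_neg_one_eq_one_of_odd_pow_eq_one {R R' : Type*} [CommRing R] [CommMonoidWithZero R']
    {χ : MulChar R R'} {v : ℕ} (hv : Odd v) (hχ : χ ^ v = 1) : χ (-1) = 1 := by
  have hpow : χ (-1) ^ v = 1 := by
    rw [← MulChar.pow_apply' _ hv.pos.ne', hχ, MulChar.one_apply isUnit_one.neg]
  rwa [← map_pow, hv.neg_one_pow] at hpow

variable {F R : Type*} [Field F] [CommRing R] [Fintype F] (p : ℕ) [Fact p.Prime] [CharP F p]

theorem gaussSum_pow_char {ψ : AddChar F R} (hψ : ∀ x, ψ (x ^ p) = ψ x)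
    (χ : MulChar F R) : gaussSum (χ ^ p) ψ = gaussSum χ ψ := by
  refine Fintype.sum_bijective _ (bijective_frobenius F p) _ _ fun x ↦ ?_
  rw [frobenius_def, hψ, MulChar.pow_apply' _ (NeZero.ne p), map_pow]

theorem gaussSum_pow_char_pow {ψ : AddChar F R} (hψ : ∀ x, ψ (x ^ p) = ψ x)
    (χ : MulChar F R) (k : ℕ) : gaussSum (χ ^ p ^ k) ψ = gaussSum χ ψ := by
  induction k with
  | zero => rw [pow_zero, pow_one]
  | succ k ih => rw [pow_succ, pow_mul, gaussSum_pow_char p hψ, ih]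

theorem gaussSum_sq_eq_card_of_semiprimitive [IsDomain R] {ψ : AddChar F R}
    (hprim : ψ.IsPrimitive) (hψ : ∀ x, ψ (x ^ p) = ψ x) {χ : MulChar F R} (hχ : χ ≠ 1) {v k : ℕ}
    (hv : Odd v) (hχv : χ ^ v = 1) (hk : (p : ZMod v) ^ k = -1) :
    gaussSum χ ψ ^ 2 = Fintype.card F := by
  have hinv : χ ^ p ^ k = χ⁻¹ := by
    obtain ⟨c, hc⟩ : v ∣ p ^ k + 1 := by
      rw [← ZMod.natCast_eq_zero_iff, Nat.cast_add, Nat.cast_pow, hk, Nat.cast_one,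
        neg_add_cancel]
    rw [eq_inv_iff_mul_eq_one, ← pow_succ, hc, pow_mul, hχv, one_pow]
  have hneg : χ⁻¹ (-1) = 1 :=
    apply_neg_one_eq_one_of_odd_pow_eq_one hv (by rw [inv_pow, hχv, inv_one])
  have hgauss : gaussSum χ⁻¹ ψ⁻¹ = gaussSum χ ψ := by
    rw [← one_mul (gaussSum _ _), ← hneg, mul_gaussSum_inv_eq_gaussSum, ← hinv,
      gaussSum_pow_char_pow p hψ]
  rw [sq, ← gaussSum_mul_gaussSum_eq_card hχ hprim, hgauss]

end GaussSum

section Lifts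

variable {F : Type*} (E : Type*) {R : Type*} [Field F] [Field E] [Algebra F E] [CommRing R]

/-- The lift `ψ ∘ Tr` of an additive character of `F` to an extension `E / F`, through which
orthogonality over `F` detects the elements of `E` of trace zero. -/
def traceAddChar (ψ : AddChar F R) : AddChar E R :=
  ψ.compAddMonoidHom (Algebra.trace F E).toAddMonoidHom

theorem traceAddChar_apply (ψ : AddChar F R) (α : E) :
    traceAddChar E ψ α = ψ (Algebra.trace F E α) := rfl

theorem isPrimitive_traceAddChar [FiniteDimensional F E] [Algebra.IsSeparable F E]
    {ψ : AddChar F R} (hψ : ψ.IsPrimitive) : (traceAddChar E ψ).IsPrimitive := by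
  refine AddChar.IsPrimitive.of_ne_one (AddChar.ne_one_iff.mpr ?_)
  obtain ⟨x, hx⟩ := AddChar.ne_one_iff.mp (hψ one_ne_zero)
  obtain ⟨α, rfl⟩ := Algebra.trace_surjective F E x
  exact ⟨α, by rwa [AddChar.mulShift_apply, one_mul] at hx⟩

theorem trace_pow_char (p : ℕ) [Fact p.Prime] [Finite F] [Finite E] [CharP F p] [CharP E p]
    (α : E) : Algebra.trace F E (α ^ p) = Algebra.trace F E α ^ p :=
  ((frobeniusEquiv F p).eq_symm_apply.mp <|
    Algebra.trace_eq_of_equiv_equiv (frobeniusEquiv F p) (frobeniusEquiv E p)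
      (RingHom.ext fun x ↦ by simp [frobenius_def]) α).symm

variable (R) in
/-- The lift `χ ∘ N` of multiplicative characters of `F` to a finite extension `E / F`, through
which a character sum over norms becomes a Gauss sum over `E`. It is bundled as a homomorphism in
`χ`, so that it preserves the order of a character. -/
def normMulChar [FiniteDimensional F E] : MulChar F R →* MulChar E R where
  toFun χ :=
    { toMonoidHom := χ.toMonoidHom.comp (Algebra.norm F)
      map_nonunit' α hα := χ.map_nonunit fun h ↦ hα (by simpa using h) }
  map_one' := MulChar.ext fun u ↦ by
    change (1 : MulChar F R) (Algebra.norm F (u : E)) = (1 : MulChar E R) u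
    rw [MulChar.one_apply (u.isUnit.map _), MulChar.one_apply u.isUnit]
  map_mul' _ _ := rfl

theorem normMulChar_apply [FiniteDimensional F E] (χ : MulChar F R) (α : E) :
    normMulChar E R χ α = χ (Algebra.norm F α) := rfl

theorem normMulChar_injective [Finite E] :
    Function.Injective (normMulChar (F := F) E R) := by
  refine fun χ χ' h ↦ MulChar.ext' fun x ↦ ?_
  obtain ⟨α, rfl⟩ := FiniteField.norm_surjective F E x
  exact DFunLike.congr_fun h α

theorem normMulChar_ne_one [Finite E] {χ : MulChar F R} (hχ : χ ≠ 1) :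
    normMulChar E R χ ≠ 1 := by
  rwa [Ne, ← map_one (normMulChar (F := F) E R), (normMulChar_injective E).eq_iff]

end Lifts

theorem exists_isPrimitive_forall_apply_pow_char_eq (F : Type*) [Field F] [Finite F] (p : ℕ)
    [Fact p.Prime] [CharP F p] : ∃ ψ : AddChar F ℂ, ψ.IsPrimitive ∧ ∀ x, ψ (x ^ p) = ψ x := by
  let _ : Algebra (ZMod p) F := ZMod.algebra F p
  refine ⟨traceAddChar F (ZMod.stdAddChar (N := p)),
    isPrimitive_traceAddChar F (ZMod.isPrimitive_stdAddChar p), fun x ↦ ?_⟩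
  rw [traceAddChar_apply, trace_pow_char, ZMod.pow_card, traceAddChar_apply]

section TraceZeroCharSum

variable {F E R : Type*} [Field F] [Field E] [Fintype E] [Algebra F E] [CommRing R]
  {ψ : AddChar F R}

theorem sum_normMulChar_mul_apply_mul_trace {χ : MulChar F R} (hχ : χ ^ Module.finrank F E = 1)
    {y : F} (hy : y ≠ 0) :
    ∑ α : E, normMulChar E R χ α * ψ (y * Algebra.trace F E α) =
      gaussSum (normMulChar E R χ) (traceAddChar E ψ) := by
  let u : Eˣ := Units.map (algebraMap F E) (Units.mk0 y hy)
  have hu : normMulChar E R χ u = 1 := by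
    change χ (Algebra.norm F (algebraMap F E y)) = 1
    rw [Algebra.norm_algebraMap, map_pow, ← MulChar.pow_apply' _ Module.finrank_pos.ne', hχ,
      MulChar.one_apply hy.isUnit]
  rw [← gaussSum_mulShift _ _ u, hu, one_mul]
  refine Finset.sum_congr rfl fun α _ ↦ ?_
  change _ = _ * ψ (Algebra.trace F E (algebraMap F E y * α))
  rw [← Algebra.smul_def, map_smul, smul_eq_mul]

variable [Fintype F] [IsDomain R]

theorem card_mul_sum_trace_eq_zero (hψ : ψ.IsPrimitive) (f : E → R) :
    Fintype.card F * ∑ α with Algebra.trace F E α = 0, f α =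
      ∑ y : F, ∑ α, f α * ψ (y * Algebra.trace F E α) := by
  rw [Finset.sum_comm, Finset.sum_filter, Finset.mul_sum]
  refine Finset.sum_congr rfl fun α _ ↦ ?_
  rw [← Finset.mul_sum, AddChar.sum_mulShift _ hψ, mul_comm, ite_mul, zero_mul, Nat.cast_ite,
    mul_ite, Nat.cast_zero, mul_zero]

theorem card_mul_sum_traceZeroNormCount_mul (hψ : ψ.IsPrimitive) {χ : MulChar F R} (hχ : χ ≠ 1)
    (hχE : χ ^ Module.finrank F E = 1) :
    Fintype.card F * ∑ b, traceZeroNormCount F E b * χ b =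
      (Fintype.card F - 1) * gaussSum (normMulChar E R χ) (traceAddChar E ψ) := by
  have hunits (u : Fˣ) := sum_normMulChar_mul_apply_mul_trace (E := E) (ψ := ψ) hχE u.ne_zero
  simp only [← nsmul_eq_mul (traceZeroNormCount F E _), sum_traceZeroNormCount_nsmul]
  rw [card_mul_sum_trace_eq_zero hψ fun α ↦ χ (Algebra.norm F α), sum_eq_apply_zero_add_sum_units]
  simp only [← normMulChar_apply E χ, hunits, zero_mul, AddChar.map_zero_eq_one, mul_one]
  rw [MulChar.sum_eq_zero_of_ne_one (normMulChar_ne_one E hχ), zero_add, Finset.sum_const,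
    Finset.card_univ, Fintype.card_units, nsmul_eq_mul, Nat.cast_pred Fintype.card_pos]

end TraceZeroCharSum

theorem prime_mul_eq_of_sum_range_mul_pow_eq {K : Type*} [Field K] [CharZero K] {v : ℕ}
    (hv : v.Prime) {ζ : K} (hζ : IsPrimitiveRoot ζ v) {x : ℕ → ℤ} {c : ℤ}
    (h : ∑ i ∈ Finset.range v, x i * ζ ^ i = c) {i : ℕ} (hi : i < v) :
    v * x i = ∑ j ∈ Finset.range v, x j - c + if i = 0 then v * c else 0 := by
  let y (j : ℕ) : ℤ := x j - if j = 0 then c else 0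
  have hy : ∑ j ∈ Finset.range v, (y j : K) * ζ ^ j = 0 := by
    simp [y, sub_mul, Finset.sum_sub_distrib, h, hv.pos]
  have hconst (j : ℕ) (hj : j ∈ Finset.range v) : y j = y i :=
    (hζ.sum_eq_zero_iff_forall_eq_int hv fun j ↦ y j).mp
      (by rwa [Fin.sum_univ_eq_sum_range fun j ↦ (y j : K) * ζ ^ j])
      ⟨j, Finset.mem_range.mp hj⟩ ⟨i, hi⟩
  have hsum : ∑ j ∈ Finset.range v, x j - c = v * y i := by
    calc ∑ j ∈ Finset.range v, x j - c = ∑ j ∈ Finset.range v, y j := by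
          simp [y, Finset.sum_sub_distrib, hv.pos]
      _ = v * y i := by
          rw [Finset.sum_congr rfl hconst, Finset.sum_const, Finset.card_range, nsmul_eq_mul]
  rw [hsum]
  simp only [y]
  split_ifs <;> ring

section GeneratorSums

variable {F E : Type*} [Field F] [Fintype F] [Field E] [Finite E] [Algebra F E] {g : Fˣ}

theorem sum_range_traceZeroNormCount_pow (hg : ∀ u, u ∈ Subgroup.zpowers g)
    (hdvd : Module.finrank F E ∣ Fintype.card F - 1) :
    ∑ i ∈ Finset.range (Module.finrank F E), traceZeroNormCount F E ((g : F) ^ i) =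
      Module.finrank F E * ∑ j ∈ Finset.range (Module.finrank F E - 1), Fintype.card F ^ j := by
  obtain ⟨w, hw⟩ := exists_eq_mul_left_of_dvd hdvd
  have hcard : Fintype.card F = w * Module.finrank F E + 1 := by
    rw [← hw, Nat.sub_add_cancel Fintype.card_pos]
  have hw0 : w ≠ 0 := by
    rintro rfl
    exact (Fintype.one_lt_card (α := F)).ne' (by simpa using hcard)
  have hsum := sum_traceZeroNormCount F E
  rw [sum_eq_apply_zero_add_nsmul_sum_range hg hw (periodic_traceZeroNormCount_pow F E g.ne_zero),
    traceZeroNormCount_zero, hcard, ← geom_sum_mul_add, ← hcard, smul_eq_mul] at hsum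
  exact mul_left_cancel₀ hw0 (by linarith)

variable {p k : ℕ} [Fact p.Prime] [CharP F p]

theorem sum_traceZeroNormCount_mul_sq {χ : MulChar F ℂ} (hχ : χ ≠ 1)
    (hχE : χ ^ Module.finrank F E = 1) (hodd : Odd (Module.finrank F E))
    (hk : (p : ZMod (Module.finrank F E)) ^ k = -1) :
    (∑ b, traceZeroNormCount F E b * χ b) ^ 2 =
      (Fintype.card F - 1) ^ 2 * Fintype.card F ^ (Module.finrank F E - 2) := by
  have := Fintype.ofFinite E
  have : CharP E p := charP_of_injective_algebraMap (algebraMap F E).injective p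
  obtain ⟨ψ, hprim, hψ⟩ := exists_isPrimitive_forall_apply_pow_char_eq F p
  have hgauss : gaussSum (normMulChar E ℂ χ) (traceAddChar E ψ) ^ 2 =
      (Fintype.card F : ℂ) ^ Module.finrank F E := by
    rw [gaussSum_sq_eq_card_of_semiprimitive p (isPrimitive_traceAddChar E hprim) _
      (normMulChar_ne_one E hχ) hodd _ hk, Module.card_eq_pow_finrank (K := F), Nat.cast_pow]
    · intro α
      rw [traceAddChar_apply, trace_pow_char, hψ, traceAddChar_apply]
    · rw [← map_pow, hχE, map_one]
  have hfinrank : 2 ≤ Module.finrank F E := by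
    by_contra! h
    rw [show Module.finrank F E = 1 by have := hodd.pos; lia, pow_one] at hχE
    exact hχ hχE
  have hcard : (Fintype.card F : ℂ) ≠ 0 := Nat.cast_ne_zero.mpr Fintype.card_ne_zero
  refine mul_left_cancel₀ (pow_ne_zero 2 hcard) ?_
  rw [← mul_pow, card_mul_sum_traceZeroNormCount_mul hprim hχ hχE, mul_pow, hgauss,
    mul_left_comm, ← pow_add, Nat.add_sub_cancel' hfinrank]

theorem sum_range_traceZeroNormCount_mul_pow_sq (hg : ∀ u, u ∈ Subgroup.zpowers g)
    (hdvd : Module.finrank F E ∣ Fintype.card F - 1) {χ : MulChar F ℂ} (hχ : χ ≠ 1)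
    (hχE : χ ^ Module.finrank F E = 1) (hodd : Odd (Module.finrank F E))
    (hk : (p : ZMod (Module.finrank F E)) ^ k = -1) :
    (∑ i ∈ Finset.range (Module.finrank F E), traceZeroNormCount F E ((g : F) ^ i) * χ g ^ i) ^ 2 =
      Module.finrank F E ^ 2 * Fintype.card F ^ (Module.finrank F E - 2) := by
  obtain ⟨w, hw⟩ := exists_eq_mul_left_of_dvd hdvd
  have hcard : (Fintype.card F : ℂ) - 1 = w * Module.finrank F E := by
    rw [← Nat.cast_pred Fintype.card_pos, hw, Nat.cast_mul]
  have hw0 : (w : ℂ) ≠ 0 := by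
    rintro h
    rw [h, zero_mul, sub_eq_zero, Nat.cast_eq_one] at hcard
    exact (Fintype.one_lt_card (α := F)).ne' hcard
  have hperχ : Function.Periodic (fun i : ℕ ↦ χ ((g : F) ^ i)) (Module.finrank F E) := fun i ↦ by
    simp only [pow_add, map_mul]
    rw [map_pow χ _ (Module.finrank F E), ← MulChar.pow_apply_coe, hχE, MulChar.one_apply_coe,
      mul_one]
  have hper : Function.Periodic
      (fun i : ℕ ↦ traceZeroNormCount F E ((g : F) ^ i) * χ ((g : F) ^ i)) (Module.finrank F E) :=
    ((periodic_traceZeroNormCount_pow F E g.ne_zero).comp Nat.cast).mul hperχ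
  have hsq := sum_traceZeroNormCount_mul_sq hχ hχE hodd hk
  rw [sum_eq_apply_zero_add_nsmul_sum_range hg hw hper, MulChar.map_zero, mul_zero, zero_add,
    nsmul_eq_mul, hcard, mul_pow, mul_pow, mul_assoc] at hsq
  simpa only [map_pow] using mul_left_cancel₀ (pow_ne_zero 2 hw0) hsq

end GeneratorSums

section Semiprimitive

theorem orderOf_mulChar_apply {M R : Type*} [CommMonoid M] [CommMonoidWithZero R] {g : Mˣ}
    (hg : ∀ u, u ∈ Subgroup.zpowers g) (χ : MulChar M R) : orderOf (χ g) = orderOf χ :=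
  orderOf_eq_orderOf_iff.mpr fun n ↦ by
    rw [← MulChar.pow_apply_coe, MulChar.eq_iff hg, MulChar.one_apply_coe]

theorem natCast_ne_zero_of_semiprimitive {R : Type*} [Ring R] {p v k : ℕ} [Fact p.Prime]
    [CharP R p] (hv : v.Prime) (hodd : Odd v) (hk : (p : ZMod v) ^ k = -1) : (v : R) ≠ 0 := by
  rw [Ne, CharP.cast_eq_zero_iff R p, Nat.prime_dvd_prime_iff_eq Fact.out hv]
  rintro rfl
  have : Fact (2 < p) := ⟨hv.odd_iff.mp hodd⟩
  rw [CharP.cast_eq_zero] at hk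
  rcases k.eq_zero_or_pos with rfl | hk0
  · exact ZMod.neg_one_ne_one (hk.symm.trans (pow_zero 0))
  · rw [zero_pow hk0.ne', zero_eq_neg] at hk
    exact one_ne_zero hk

variable {F E : Type*} [Field F] [Fintype F] [Field E] [Finite E] [Algebra F E] {g : Fˣ}
  {p k s : ℕ} [Fact p.Prime] [CharP F p]

theorem exists_units_traceZeroNormCount_pow_eq (hg : ∀ u, u ∈ Subgroup.zpowers g)
    (hE : (Module.finrank F E).Prime) (hodd : Odd (Module.finrank F E))
    (hk : (p : ZMod (Module.finrank F E)) ^ k = -1) (hs : Fintype.card F = s ^ 2)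
    (hdvd : Module.finrank F E ∣ Fintype.card F - 1) :
    ∃ σ : ℤˣ, ∀ i, (traceZeroNormCount F E ((g : F) ^ i) : ℤ) =
      ∑ j ∈ Finset.range (Module.finrank F E - 1), (Fintype.card F : ℤ) ^ j +
        (σ : ℤ) * (s : ℤ) ^ (Module.finrank F E - 2) *
          if Module.finrank F E ∣ i then 1 - (Module.finrank F E : ℤ) else 1 := by
  obtain ⟨χ, hχ⟩ := MulChar.exists_mulChar_orderOf F hdvd
    (Complex.isPrimitiveRoot_exp _ hE.ne_zero)
  have hsum := sum_range_traceZeroNormCount_pow hg hdvd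
  set n := Module.finrank F E
  have hχ1 : χ ≠ 1 := by
    rintro rfl
    exact hE.one_lt.ne (orderOf_one.symm.trans hχ)
  have hχn : χ ^ n = 1 := hχ ▸ pow_orderOf_eq_one χ
  have hζ : IsPrimitiveRoot (χ g) n :=
    IsPrimitiveRoot.iff_orderOf.mpr ((orderOf_mulChar_apply hg χ).trans hχ)
  obtain ⟨σ, hσ⟩ : ∃ σ : ℤˣ,
      ∑ i ∈ Finset.range n, ((traceZeroNormCount F E ((g : F) ^ i) : ℤ) : ℂ) * χ g ^ i =
        ((-(n * (σ * s ^ (n - 2))) : ℤ) : ℂ) := by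
    have hsq := sum_range_traceZeroNormCount_mul_pow_sq hg hdvd hχ1 hχn hodd hk
    rw [hs, Nat.cast_pow, ← pow_mul, mul_comm 2, pow_mul, ← mul_pow, sq_eq_sq_iff_eq_or_eq_neg]
      at hsq
    rcases hsq with h | h
    · exact ⟨-1, by simpa using h⟩
    · exact ⟨1, by simpa using h⟩
  refine ⟨σ, fun i ↦ mul_left_cancel₀ (Nat.cast_ne_zero.mpr hE.ne_zero : (n : ℤ) ≠ 0) ?_⟩
  have hcoeff := prime_mul_eq_of_sum_range_mul_pow_eq hE hζ hσ (Nat.mod_lt i hE.pos)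
  rw [periodic_traceZeroNormCount_pow F E g.ne_zero |>.map_mod_nat i, ← Nat.cast_sum,
    hsum] at hcoeff
  simp only [hcoeff, Nat.dvd_iff_mod_eq_zero]
  push_cast
  split_ifs <;> ring

theorem traceZeroNormCount_pow_of_semiprimitive (hg : ∀ u, u ∈ Subgroup.zpowers g)
    (hE : (Module.finrank F E).Prime) (hodd : Odd (Module.finrank F E))
    (hk : (p : ZMod (Module.finrank F E)) ^ k = -1) (hs : Fintype.card F = s ^ 2) {ε : ℤˣ}
    (hε : (s : ZMod (Module.finrank F E)) = (ε : ℤ)) (i : ℕ) :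
    (traceZeroNormCount F E ((g : F) ^ i) : ℤ) =
      ∑ j ∈ Finset.range (Module.finrank F E - 1), (Fintype.card F : ℤ) ^ j +
        (ε : ℤ) * (s : ℤ) ^ (Module.finrank F E - 2) *
          if Module.finrank F E ∣ i then 1 - (Module.finrank F E : ℤ) else 1 := by
  have hcount := traceZeroNormCount_pow_eq_finrank_mul_PP F E hE
    (natCast_ne_zero_of_semiprimitive hE hodd hk) g 1
  have hexists := exists_units_traceZeroNormCount_pow_eq (k := k) hg hE hodd hk hs
  set n := Module.finrank F E
  have : Fact (2 < n) := ⟨hE.odd_iff.mp hodd⟩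
  have hq : (Fintype.card F : ZMod n) = 1 := by
    rw [hs, Nat.cast_pow, hε, ← Int.cast_pow, ← Units.val_pow_eq_pow_val, Int.units_sq,
      Units.val_one, Int.cast_one]
  obtain ⟨σ, hσ⟩ := hexists <| by
    rw [← ZMod.natCast_eq_zero_iff, Nat.cast_pred Fintype.card_pos, hq, sub_self]
  have hspow : (s : ZMod n) ^ (n - 2) = (ε : ℤ) := by
    have : Odd (n - 2) := Nat.Odd.sub_even (hE.two_le) hodd even_two
    rw [hε]
    rcases Int.units_eq_one_or ε with rfl | rfl <;> simp [this.neg_one_pow]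
  have hmod : (((σ * ε : ℤˣ) : ℤ) : ZMod n) = 1 := by
    have h := congrArg (Int.cast : ℤ → ZMod n) (hσ 1)
    rw [hcount, if_neg hE.not_dvd_one] at h
    push_cast at h
    simp only [hq, hspow, one_pow, Finset.sum_const, Finset.card_range, nsmul_eq_mul,
      Nat.cast_pred hE.pos, CharP.cast_eq_zero, zero_mul, mul_one, zero_sub] at h
    rw [Units.val_mul, Int.cast_mul, neg_add_eq_zero.mp h.symm]
  have hσε : σ * ε = 1 := (Int.units_eq_one_or _).resolve_right fun h ↦ by
    rw [h, Units.val_neg, Units.val_one, Int.cast_neg, Int.cast_one] at hmod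
    exact ZMod.neg_one_ne_one hmod
  rw [hσ, eq_inv_of_mul_eq_one_left hσε, Int.units_inv_eq_self]

end Semiprimitive

theorem exists_orderOf_eq_two_mul {R : Type*} [Ring R] [NoZeroDivisors R] {x : R} {k : ℕ}
    (hR : (-1 : R) ≠ 1) (hx : x ^ k = -1) : ∃ t, orderOf x = 2 * t ∧ x ^ t = -1 := by
  have hdvd : orderOf x ∣ 2 * k :=
    orderOf_dvd_of_pow_eq_one (by rw [mul_comm, pow_mul, hx, neg_one_sq])
  have hk : ¬orderOf x ∣ k := fun h ↦ hR (hx ▸ orderOf_dvd_iff_pow_eq_one.mp h)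
  obtain ⟨t, ht⟩ : 2 ∣ orderOf x := by
    by_contra h
    exact hk ((Nat.prime_two.coprime_iff_not_dvd.mpr h).symm.dvd_of_dvd_mul_left hdvd)
  have htk : t ∣ k := Nat.dvd_of_mul_dvd_mul_left two_pos (ht ▸ hdvd)
  have hsq : (x ^ t) ^ 2 = 1 := by rw [← pow_mul, mul_comm, ← ht, pow_orderOf_eq_one]
  exact ⟨t, ht, (sq_eq_one_iff.mp hsq).resolve_left fun h ↦
    hk ((orderOf_dvd_of_pow_eq_one h).trans htk)⟩

theorem exists_pow_eq_sq_of_orderOf_dvd {p v k r : ℕ} (hv : v.Prime) (hodd : Odd v)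
    (hk : (p : ZMod v) ^ k = -1) (hr : orderOf (p : ZMod v) ∣ r) :
    ∃ s : ℕ, p ^ r = s ^ 2 ∧ (s : ZMod v) = (-1) ^ (r / orderOf (p : ZMod v)) := by
  have : Fact v.Prime := ⟨hv⟩
  have : Fact (2 < v) := ⟨hv.odd_iff.mp hodd⟩
  obtain ⟨t, horder, ht⟩ := exists_orderOf_eq_two_mul ZMod.neg_one_ne_one hk
  obtain ⟨c, rfl⟩ := hr
  have hpos : 0 < orderOf (p : ZMod v) := by
    rw [horder, Nat.mul_pos_iff_of_pos_left two_pos, Nat.pos_iff_ne_zero]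
    rintro rfl
    exact ZMod.neg_one_ne_one (ht.symm.trans (pow_zero _))
  refine ⟨p ^ (t * c), ?_, ?_⟩
  · rw [horder, ← pow_mul, mul_comm (t * c), mul_assoc]
  · rw [Nat.mul_div_cancel_left c hpos, Nat.cast_pow, pow_mul, ht]

section IrreduciblePolynomialCount

variable {F : Type*} [Field F] [Fintype F] {v : ℕ}

theorem PP_sub_eq_zero_of_coprime (hv : v.Prime) (hvF : (v : F) ≠ 0)
    (hcop : (Fintype.card F - 1).Coprime v) (g : Fˣ) (h : ℕ) :
    (PP F (g : F) v (Fintype.card F - 1) h 0 : ℝ) -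
      ((Fintype.card F : ℝ) ^ (v - 1) - 1) / (v * ((Fintype.card F : ℝ) - 1)) = 0 := by
  obtain ⟨p, hp⟩ := CharP.exists F
  have : Fact p.Prime := ⟨CharP.char_is_prime F p⟩
  have : NeZero v := ⟨hv.ne_zero⟩
  let E := FiniteField.Extension F p v
  have hE : Module.finrank F E = v := FiniteField.finrank_extension F p v
  have hcount := traceZeroNormCount_mul_card_sub_one_add_one_of_coprime E (hE.symm ▸ hcop) (g ^ h)
  rw [Units.val_pow_eq_pow_val, traceZeroNormCount_pow_eq_finrank_mul_PP F E (hE.symm ▸ hv)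
    (by rwa [hE]), hE] at hcount
  have hcount' : (v : ℝ) * PP F (g : F) v (Fintype.card F - 1) h 0 * (Fintype.card F - 1) + 1 =
      (Fintype.card F : ℝ) ^ (v - 1) := by
    rw [← Nat.cast_pred Fintype.card_pos]
    exact_mod_cast hcount
  have hv0 : (v : ℝ) ≠ 0 := Nat.cast_ne_zero.mpr hv.ne_zero
  have hq0 : (Fintype.card F : ℝ) - 1 ≠ 0 :=
    sub_ne_zero.mpr (Nat.cast_ne_one.mpr Fintype.one_lt_card.ne')
  rw [← hcount', sub_eq_zero, eq_div_iff (mul_ne_zero hv0 hq0)]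
  ring

variable {p k : ℕ} [Fact p.Prime] [CharP F p]

theorem PP_sub_eq_of_semiprimitive {g : Fˣ} (hg : ∀ u, u ∈ Subgroup.zpowers g) (hv : v.Prime)
    (hodd : Odd v) (hk : (p : ZMod v) ^ k = -1) {s : ℕ} (hs : Fintype.card F = s ^ 2) {ε : ℤˣ}
    (hε : (s : ZMod v) = (ε : ℤ)) (h : ℕ) :
    (PP F (g : F) v (Fintype.card F - 1) h 0 : ℝ) -
      ((Fintype.card F : ℝ) ^ (v - 1) - 1) / (v * ((Fintype.card F : ℝ) - 1)) =
      (ε : ℤ) * (s : ℝ) ^ (v - 2) * (if v ∣ h then 1 - (v : ℝ) else 1) / v := by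
  have : NeZero v := ⟨hv.ne_zero⟩
  let E := FiniteField.Extension F p v
  have hE : Module.finrank F E = v := FiniteField.finrank_extension F p v
  have hcount := traceZeroNormCount_pow_of_semiprimitive (E := E) hg (hE.symm ▸ hv)
    (hE.symm ▸ hodd) (hE.symm ▸ hk) hs (by rwa [hE]) h
  rw [traceZeroNormCount_pow_eq_finrank_mul_PP F E (hE.symm ▸ hv)
    (hE.symm ▸ natCast_ne_zero_of_semiprimitive hv hodd hk), hE] at hcount
  have hcount' : (v : ℝ) * PP F (g : F) v (Fintype.card F - 1) h 0 =
      ∑ j ∈ Finset.range (v - 1), (Fintype.card F : ℝ) ^ j +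
        (ε : ℤ) * (s : ℝ) ^ (v - 2) * if v ∣ h then 1 - (v : ℝ) else 1 := by
    exact_mod_cast hcount
  have hv0 : (v : ℝ) ≠ 0 := Nat.cast_ne_zero.mpr hv.ne_zero
  have hq1 : (Fintype.card F : ℝ) ≠ 1 := Nat.cast_ne_one.mpr Fintype.one_lt_card.ne'
  rw [mul_comm (v : ℝ) (_ - 1), ← div_div, ← geom_sum_eq hq1, eq_div_iff hv0, sub_mul,
    div_mul_cancel₀ _ hv0, mul_comm, hcount', add_sub_cancel_left]

theorem PP_sub_eq_of_orderOf_dvd {g : Fˣ} (hg : ∀ u, u ∈ Subgroup.zpowers g) (hv : v.Prime)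
    (hodd : Odd v) (hk : (p : ZMod v) ^ k = -1) {r : ℕ} (hF : Fintype.card F = p ^ r)
    (hr : orderOf (p : ZMod v) ∣ r) (h : ℕ) :
    (PP F (g : F) v (Fintype.card F - 1) h 0 : ℝ) -
      ((Fintype.card F : ℝ) ^ (v - 1) - 1) / (v * ((Fintype.card F : ℝ) - 1)) =
      (-1) ^ (r / orderOf (p : ZMod v)) * Real.sqrt ((Fintype.card F : ℝ) ^ (v - 2)) *
        (if v ∣ h then 1 - (v : ℝ) else 1) / v := by
  obtain ⟨s, hs, hε⟩ := exists_pow_eq_sq_of_orderOf_dvd hv hodd hk hr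
  rw [← hF] at hs
  have hsqrt : Real.sqrt ((Fintype.card F : ℝ) ^ (v - 2)) = (s : ℝ) ^ (v - 2) := by
    rw [hs, Nat.cast_pow, pow_right_comm, Real.sqrt_sq (by positivity)]
  rw [hsqrt, PP_sub_eq_of_semiprimitive hg hv hodd hk hs
    (ε := (-1) ^ (r / orderOf (p : ZMod v))) (by rw [hε]; push_cast; rfl)]
  push_cast
  rfl

end IrreduciblePolynomialCount

theorem stmt19_general (p r v : ℕ) (hp : p.Prime) (hv : v.Prime) (hvodd : Odd v)
    (hsemi : ∃ k : ℕ, (p : ZMod v) ^ k = -1) (F : Type*) [Field F] [Fintype F]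
    (hF : Fintype.card F = p ^ r) (g : Fˣ) (hg : ∀ u : Fˣ, u ∈ Subgroup.zpowers g) (h : ℕ) :
    (¬ orderOf (p : ZMod v) ∣ r →
      (PP F (g : F) v (Fintype.card F - 1) h 0 : ℝ) -
        ((Fintype.card F : ℝ) ^ (v - 1) - 1) / ((v : ℝ) * ((Fintype.card F : ℝ) - 1)) = 0) ∧
    (orderOf (p : ZMod v) ∣ r → ¬ v ∣ h →
      (PP F (g : F) v (Fintype.card F - 1) h 0 : ℝ) -
        ((Fintype.card F : ℝ) ^ (v - 1) - 1) / ((v : ℝ) * ((Fintype.card F : ℝ) - 1)) =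
        (-1 : ℝ) ^ (r / orderOf (p : ZMod v)) *
          Real.sqrt ((Fintype.card F : ℝ) ^ (v - 2)) / (v : ℝ)) ∧
    (orderOf (p : ZMod v) ∣ r → v ∣ h →
      (PP F (g : F) v (Fintype.card F - 1) h 0 : ℝ) -
        ((Fintype.card F : ℝ) ^ (v - 1) - 1) / ((v : ℝ) * ((Fintype.card F : ℝ) - 1)) =
        -(-1 : ℝ) ^ (r / orderOf (p : ZMod v)) * ((v : ℝ) - 1) *
          Real.sqrt ((Fintype.card F : ℝ) ^ (v - 2)) / (v : ℝ)) := by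
  obtain ⟨k, hk⟩ := hsemi
  have : Fact p.Prime := ⟨hp⟩
  have : CharP F p := charP_of_card_eq_prime_pow hF
  have hvF : (v : F) ≠ 0 := natCast_ne_zero_of_semiprimitive hv hvodd hk
  have hcoprime (hr : ¬ orderOf (p : ZMod v) ∣ r) : (Fintype.card F - 1).Coprime v := by
    rwa [Nat.coprime_comm, hv.coprime_iff_not_dvd, ← ZMod.natCast_eq_zero_iff,
      Nat.cast_pred Fintype.card_pos, sub_eq_zero, hF, Nat.cast_pow,
      ← orderOf_dvd_iff_pow_eq_one]
  refine ⟨fun hr ↦ PP_sub_eq_zero_of_coprime hv hvF (hcoprime hr) g h,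
    fun hr hvh ↦ ?_, fun hr hvh ↦ ?_⟩
  · rw [PP_sub_eq_of_orderOf_dvd hg hv hvodd hk hF hr, if_neg hvh, mul_one]
  · rw [PP_sub_eq_of_orderOf_dvd hg hv hvodd hk hF hr, if_pos hvh]
    ring

/-- For `p = 2`, `q = 2^r`, a semiprimitive odd prime `v` (i.e. `−1` is a power of `2`
mod `v`), `m = v`, `s = q−1`, trace coefficient `0` and fixed norm `b = g^{ind b}`:
the value of `P_v(0, q−1, ind b) − (q^{v−1}−1)/(v(q−1))`. -/
theorem stmt19 (r v : ℕ) (hr : 0 < r) (hv : v.Prime) (hvodd : Odd v)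
    (hsemi : ∃ k : ℕ, (2 : ZMod v) ^ k = -1)
    (F : Type*) [Field F] [Fintype F]
    (hF : Fintype.card F = 2 ^ r)
    (g : Fˣ) (hg : ∀ u : Fˣ, u ∈ Subgroup.zpowers g)
    (b : Fˣ) (indb : ℕ) (hindb : indb ≤ Fintype.card F - 2 ∧ g ^ indb = b) :
    (¬ orderOf (2 : ZMod v) ∣ r →
      (PP F (g : F) v (Fintype.card F - 1) indb 0 : ℝ) -
        ((Fintype.card F : ℝ) ^ (v - 1) - 1) / ((v : ℝ) * ((Fintype.card F : ℝ) - 1)) = 0) ∧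
    (orderOf (2 : ZMod v) ∣ r → ¬ v ∣ indb →
      (PP F (g : F) v (Fintype.card F - 1) indb 0 : ℝ) -
        ((Fintype.card F : ℝ) ^ (v - 1) - 1) / ((v : ℝ) * ((Fintype.card F : ℝ) - 1)) =
        (-1 : ℝ) ^ (r / orderOf (2 : ZMod v)) *
          Real.sqrt ((Fintype.card F : ℝ) ^ (v - 2)) / (v : ℝ)) ∧
    (orderOf (2 : ZMod v) ∣ r → v ∣ indb →
      (PP F (g : F) v (Fintype.card F - 1) indb 0 : ℝ) -
        ((Fintype.card F : ℝ) ^ (v - 1) - 1) / ((v : ℝ) * ((Fintype.card F : ℝ) - 1)) =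
        -(-1 : ℝ) ^ (r / orderOf (2 : ZMod v)) * ((v : ℝ) - 1) *
          Real.sqrt ((Fintype.card F : ℝ) ^ (v - 2)) / (v : ℝ)) := by
  simpa only [Nat.cast_ofNat] using
    stmt19_general 2 r v Nat.prime_two hv hvodd (by exact_mod_cast hsemi) F hF g hg indb

end
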